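/- For integers r ≥ 1 and k ≥ 2 with rk ≥ 3, the error term E_k^r(x) = V_k^r(x) − (2x)^k/ζ(rk) has exact order x^{k−1}: E_k^r(x) = O(x^{k−1}) and E_k^r(x) = Ω(x^{k−1}). -/

import Mathlib

open Filter Asymptotics

/-- `V_k^r(x)`: the number of `k`-tuples of nonzero integers with `|x_i| ≤ x`
that are relatively `r`-prime (no prime `p` with `p^r` dividing every `x_i`). -/
noncomputable def V (r k : ℕ) (x : ℝ) : ℕ :=
  Nat.card {t : Fin k → ℤ // (∀ i, t i ≠ 0 ∧ |(t i : ℝ)| ≤ x) ∧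
    ¬ ∃ p : ℕ, p.Prime ∧ ∀ i, (p : ℤ) ^ r ∣ t i}

/-- The Riemann zeta function on real arguments `s > 1`, as a series. -/
noncomputable def zetaR (s : ℝ) : ℝ := ∑' n : ℕ, 1 / ((n : ℝ) + 1) ^ s

/-!
Möbius inversion over the largest `d` whose `r`-th power divides every coordinate gives
`V_k^r(x) = ∑ μ(d) (2⌊x/d^r⌋)^k`. Since `1/ζ(rk) = ∑ μ(d)/d^(rk)`, the error term is the sum of
the differences `μ(d) ((2⌊x/d^r⌋)^k - (2x/d^r)^k)`, each of which is `O((x/d^r)^(k-1))`; these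
bounds are summable over `d` because `r(k-1) ≥ 2`.

The bound is attained because `V_k^r` is constant on `[n, n+1)` whereas `(2x)^k/ζ(rk)` grows by
an amount of order `n^(k-1)` between `n` and `n + 1/2`: the errors at `n` and `n + 1/2` cannot both
be `o(n^(k-1))`.
-/

open ArithmeticFunction (moebius)
open scoped Finset

lemma sum_moebius_Icc_filter_dvd {n N : ℕ} (hn : n ≠ 0) (hN : n ≤ N) :
    ∑ d ∈ Finset.Icc 1 N with d ∣ n, moebius d = if n = 1 then 1 else 0 := by
  have divisors_eq : {d ∈ Finset.Icc 1 N | d ∣ n} = n.divisors := by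
    ext d
    simp only [Finset.mem_filter, Finset.mem_Icc, Nat.mem_divisors]
    exact ⟨fun h => ⟨h.2, hn⟩, fun h =>
      ⟨⟨Nat.pos_of_ne_zero (ne_zero_of_dvd_ne_zero hn h.1),
        (Nat.le_of_dvd (Nat.pos_of_ne_zero hn) h.1).trans hN⟩, h.1⟩⟩
  rw [divisors_eq, ← ArithmeticFunction.coe_mul_zeta_apply,
    ArithmeticFunction.moebius_mul_coe_zeta, ArithmeticFunction.one_apply]

section RootGcd

variable {ι : Type*} [Fintype ι] {r : ℕ} {t : ι → ℤ}

/-- The largest natural number whose `r`-th power divides every coordinate of the integer tuple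
`t`, so that `t` is relatively `r`-prime exactly when it equals `1`. It is `0` if `t = 0` or
`r = 0`. -/
def rootGcd (r : ℕ) (t : ι → ℤ) : ℕ :=
  Nat.floorRoot r (Finset.univ.gcd fun i => (t i).natAbs)

lemma dvd_rootGcd_iff {d : ℕ} : d ∣ rootGcd r t ↔ ∀ i, (d : ℤ) ^ r ∣ t i := by
  simp only [rootGcd, ← Nat.pow_dvd_iff_dvd_floorRoot, Finset.dvd_gcd_iff, Finset.mem_univ,
    true_imp_iff, ← Int.natCast_dvd, Nat.cast_pow]

lemma rootGcd_eq_one_iff :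
    rootGcd r t = 1 ↔ ¬ ∃ p : ℕ, p.Prime ∧ ∀ i, (p : ℤ) ^ r ∣ t i := by
  simp only [Nat.eq_one_iff_not_exists_prime_dvd, dvd_rootGcd_iff, not_exists, not_and]

lemma rootGcd_ne_zero (hr : r ≠ 0) (ht : t ≠ 0) : rootGcd r t ≠ 0 := by
  obtain ⟨i, hi⟩ := Function.ne_iff.mp ht
  refine Nat.floorRoot_ne_zero.mpr ⟨hr, fun hgcd => hi ?_⟩
  exact Int.natAbs_eq_zero.mp (Finset.gcd_eq_zero_iff.mp hgcd i (Finset.mem_univ i))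

lemma rootGcd_le_natAbs (hr : r ≠ 0) {i : ι} (hi : t i ≠ 0) : rootGcd r t ≤ (t i).natAbs := by
  have pow_dvd : rootGcd r t ^ r ∣ (t i).natAbs :=
    Int.natCast_dvd.mp (mod_cast dvd_rootGcd_iff.mp dvd_rfl i)
  exact (Nat.le_self_pow hr _).trans (Nat.le_of_dvd (Int.natAbs_pos.mpr hi) pow_dvd)

end RootGcd

section Box

/-- The nonzero integers of absolute value at most `N`. -/
noncomputable def nonzeroInterval (N : ℕ) : Finset ℤ := (Finset.Icc (-N : ℤ) N).erase 0

/-- The tuples counted by `V` before the primality condition is imposed: `k` nonzero integers of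
absolute value at most `N`. -/
noncomputable def nonzeroBox (k N : ℕ) : Finset (Fin k → ℤ) :=
  Fintype.piFinset fun _ => nonzeroInterval N

lemma mem_nonzeroInterval {N : ℕ} {z : ℤ} : z ∈ nonzeroInterval N ↔ z ≠ 0 ∧ z.natAbs ≤ N := by
  rw [nonzeroInterval, Finset.mem_erase, Finset.mem_Icc]
  omega

lemma mem_nonzeroBox {k N : ℕ} {t : Fin k → ℤ} :
    t ∈ nonzeroBox k N ↔ ∀ i, t i ≠ 0 ∧ (t i).natAbs ≤ N := by
  simp only [nonzeroBox, Fintype.mem_piFinset, mem_nonzeroInterval]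

lemma card_nonzeroInterval (N : ℕ) : #(nonzeroInterval N) = 2 * N := by
  rw [nonzeroInterval, Finset.card_erase_of_mem (by simp), Int.card_Icc]
  omega

lemma card_nonzeroInterval_filter_dvd (N : ℕ) {m : ℕ} (hm : m ≠ 0) :
    #{z ∈ nonzeroInterval N | (m : ℤ) ∣ z} = 2 * (N / m) := by
  have hmZ : (m : ℤ) ≠ 0 := Nat.cast_ne_zero.mpr hm
  have multiples_eq : {z ∈ nonzeroInterval N | (m : ℤ) ∣ z} =
      (nonzeroInterval (N / m)).image ((m : ℤ) * ·) := by
    have mul_mem (c : ℤ) : (m : ℤ) * c ∈ nonzeroInterval N ↔ c ∈ nonzeroInterval (N / m) := by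
      simp only [mem_nonzeroInterval, Int.natAbs_mul, Int.natAbs_natCast, mul_ne_zero_iff,
        Nat.le_div_iff_mul_le (Nat.pos_of_ne_zero hm), mul_comm m, hmZ, ne_eq,
        not_false_eq_true, true_and]
    ext z
    simp only [Finset.mem_filter, Finset.mem_image]
    constructor
    · rintro ⟨hz, c, rfl⟩
      exact ⟨c, (mul_mem c).mp hz, rfl⟩
    · rintro ⟨c, hc, rfl⟩
      exact ⟨(mul_mem c).mpr hc, dvd_mul_right _ _⟩
  rw [multiples_eq, Finset.card_image_of_injective _ (mul_right_injective₀ hmZ),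
    card_nonzeroInterval]

lemma card_nonzeroBox_filter_dvd_rootGcd (r k N : ℕ) {d : ℕ} (hd : d ≠ 0) :
    #{t ∈ nonzeroBox k N | d ∣ rootGcd r t} = (2 * (N / d ^ r)) ^ k := by
  have filter_eq : {t ∈ nonzeroBox k N | d ∣ rootGcd r t} =
      Fintype.piFinset fun _ : Fin k => {z ∈ nonzeroInterval N | ((d ^ r : ℕ) : ℤ) ∣ z} := by
    ext t
    simp only [nonzeroBox, Finset.mem_filter, Fintype.mem_piFinset, dvd_rootGcd_iff, forall_and,
      Nat.cast_pow]
  rw [filter_eq, Fintype.card_piFinset_const,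
    card_nonzeroInterval_filter_dvd N (pow_ne_zero r hd)]

end Box

section Counting

variable {r k : ℕ}

lemma V_eq_card_filter_nonzeroBox (r k : ℕ) (x : ℝ) :
    V r k x = #{t ∈ nonzeroBox k ⌊x⌋₊ | rootGcd r t = 1} := by
  rw [V, ← Nat.card_eq_finsetCard]
  refine Nat.card_congr (Equiv.subtypeEquivRight fun t => ?_)
  rw [Finset.mem_filter, mem_nonzeroBox, rootGcd_eq_one_iff]
  refine and_congr_left fun _ => forall_congr' fun i => and_congr_right fun hi => ?_
  rw [Nat.le_floor_iff' (Int.natAbs_ne_zero.mpr hi), Nat.cast_natAbs, Int.cast_abs]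

lemma V_natFloor (r k : ℕ) (x : ℝ) : V r k ⌊x⌋₊ = V r k x := by
  simp only [V_eq_card_filter_nonzeroBox, Nat.floor_natCast]

lemma V_eq_sum_moebius (hr : r ≠ 0) (hk : k ≠ 0) (x : ℝ) :
    (V r k x : ℤ) =
      ∑ d ∈ Finset.Icc 1 ⌊x⌋₊, moebius d * ((2 * (⌊x⌋₊ / d ^ r)) ^ k : ℕ) := by
  set N := ⌊x⌋₊
  have indicator_eq (t : Fin k → ℤ) (ht : t ∈ nonzeroBox k N) :
      (if rootGcd r t = 1 then 1 else 0 : ℤ) =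
        ∑ d ∈ Finset.Icc 1 N, if d ∣ rootGcd r t then moebius d else 0 := by
    obtain ⟨hne, hle⟩ := mem_nonzeroBox.mp ht ⟨0, Nat.pos_of_ne_zero hk⟩
    rw [← Finset.sum_filter,
      sum_moebius_Icc_filter_dvd (rootGcd_ne_zero hr (Function.ne_iff.mpr ⟨_, hne⟩))
        ((rootGcd_le_natAbs hr hne).trans hle)]
  calc (V r k x : ℤ)
      = ∑ t ∈ nonzeroBox k N, if rootGcd r t = 1 then 1 else 0 := by
        rw [V_eq_card_filter_nonzeroBox, Finset.card_filter, Nat.cast_sum]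
        simp only [Nat.cast_ite, Nat.cast_one, Nat.cast_zero, N]
    _ = ∑ t ∈ nonzeroBox k N, ∑ d ∈ Finset.Icc 1 N,
          if d ∣ rootGcd r t then moebius d else 0 :=
        Finset.sum_congr rfl indicator_eq
    _ = ∑ d ∈ Finset.Icc 1 N, moebius d * #{t ∈ nonzeroBox k N | d ∣ rootGcd r t} := by
        rw [Finset.sum_comm]
        simp only [← Finset.sum_filter, Finset.sum_const, nsmul_eq_mul, mul_comm]
    _ = ∑ d ∈ Finset.Icc 1 N, moebius d * ((2 * (N / d ^ r)) ^ k : ℕ) := by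
        refine Finset.sum_congr rfl fun d hd => ?_
        have hd0 : d ≠ 0 := Nat.one_le_iff_ne_zero.mp (Finset.mem_Icc.mp hd).1
        rw [card_nonzeroBox_filter_dvd_rootGcd r k N hd0]

lemma hasSum_V (hr : r ≠ 0) (hk : k ≠ 0) (x : ℝ) :
    HasSum (fun d : ℕ => (moebius d : ℝ) * (2 * (⌊x / (d : ℝ) ^ r⌋₊ : ℝ)) ^ k) (V r k x) := by
  have floor_eq (d : ℕ) : ⌊x / (d : ℝ) ^ r⌋₊ = ⌊x⌋₊ / d ^ r := by
    rw [← Nat.cast_pow, Nat.floor_div_natCast]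
  have V_eq : (V r k x : ℝ) = ∑ d ∈ Finset.Icc 1 ⌊x⌋₊,
      (moebius d : ℝ) * (2 * (⌊x / (d : ℝ) ^ r⌋₊ : ℝ)) ^ k := by
    rw [← Int.cast_natCast, V_eq_sum_moebius hr hk]
    simp only [floor_eq, Int.cast_sum, Int.cast_mul, Int.cast_pow, Int.cast_natCast,
      Int.cast_ofNat, Nat.cast_pow, Nat.cast_mul, Nat.cast_ofNat]
  rw [V_eq]
  refine hasSum_sum_of_ne_finset_zero fun d hd => ?_
  rcases Nat.eq_zero_or_pos d with rfl | hd0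
  · simp
  · have lt_pow : ⌊x⌋₊ < d ^ r :=
      (lt_of_not_ge fun hle => hd (Finset.mem_Icc.mpr ⟨hd0, hle⟩)).trans_le
        (Nat.le_self_pow hr d)
    rw [floor_eq, Nat.div_eq_of_lt lt_pow, Nat.cast_zero, mul_zero, zero_pow hk, mul_zero]

end Counting

section Zeta

variable {s : ℝ}

lemma ofReal_zetaR (hs : 1 < s) : (zetaR s : ℂ) = riemannZeta s := by
  rw [zeta_eq_tsum_one_div_nat_add_one_cpow (by simpa using hs), zetaR, Complex.ofReal_tsum]
  refine tsum_congr fun n => ?_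
  rw [Complex.ofReal_div, Complex.ofReal_cpow (by positivity)]
  push_cast
  rfl

lemma zetaR_pos (hs : 1 < s) : 0 < zetaR s := by
  exact_mod_cast (ofReal_zetaR hs).symm ▸ riemannZeta_pos_of_one_lt hs

lemma hasSum_moebius_div_rpow (hs : 1 < s) :
    HasSum (fun d : ℕ => (moebius d : ℝ) / (d : ℝ) ^ s) (zetaR s)⁻¹ := by
  have hsC : 1 < (s : ℂ).re := by simpa using hs
  have LSeries_eq : LSeries (fun n => (moebius n : ℂ)) s = ((zetaR s)⁻¹ : ℝ) := by
    rw [Complex.ofReal_inv, ofReal_zetaR hs, ← ArithmeticFunction.LSeries_zeta_eq_riemannZeta hsC]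
    exact eq_inv_of_mul_eq_one_right (ArithmeticFunction.LSeries_zeta_mul_Lseries_moebius hsC)
  have hasSum_term := (ArithmeticFunction.LSeriesSummable_moebius_iff.mpr hsC).LSeriesHasSum
  rw [LSeries_eq, LSeriesHasSum] at hasSum_term
  rw [← Complex.hasSum_ofReal]
  refine hasSum_term.congr_fun fun d => ?_
  rcases eq_or_ne d 0 with rfl | hd
  · simp
  · rw [LSeries.term_of_ne_zero hd, Complex.ofReal_div, Complex.ofReal_cpow d.cast_nonneg,
      Complex.ofReal_intCast, Complex.ofReal_natCast]

end Zeta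

section UpperBound

variable {r k : ℕ}

/-- The error term `E_k^r(x)`. -/
noncomputable def errorTerm (r k : ℕ) (x : ℝ) : ℝ :=
  (V r k x : ℝ) - (2 * x) ^ k / zetaR (r * k)

lemma hasSum_errorTerm (hrk : 1 < r * k) (x : ℝ) :
    HasSum (fun d : ℕ => (moebius d : ℝ) *
      ((2 * (⌊x / (d : ℝ) ^ r⌋₊ : ℝ)) ^ k - (2 * (x / (d : ℝ) ^ r)) ^ k)) (errorTerm r k x) := by
  obtain ⟨hr, hk⟩ : r ≠ 0 ∧ k ≠ 0 := mul_ne_zero_iff.mp (by omega)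
  have main_term := (hasSum_moebius_div_rpow (s := r * k) (mod_cast hrk)).mul_left ((2 * x) ^ k)
  rw [← div_eq_mul_inv] at main_term
  refine ((hasSum_V hr hk x).sub main_term).congr_fun fun d => ?_
  rw [← Nat.cast_mul, Real.rpow_natCast, pow_mul, mul_sub, ← mul_div_assoc 2, div_pow]
  ring

lemma abs_natFloor_pow_sub_pow_le (k : ℕ) {y : ℝ} (hy : 0 ≤ y) :
    |(⌊y⌋₊ : ℝ) ^ k - y ^ k| ≤ k * y ^ (k - 1) := by
  have floor_le : (⌊y⌋₊ : ℝ) ≤ y := Nat.floor_le hy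
  have abs_sub_le_one : |(⌊y⌋₊ : ℝ) - y| ≤ 1 := by
    rw [abs_le]
    constructor <;> linarith [Nat.lt_floor_add_one y]
  calc |(⌊y⌋₊ : ℝ) ^ k - y ^ k|
      ≤ |(⌊y⌋₊ : ℝ) - y| * k * max |(⌊y⌋₊ : ℝ)| |y| ^ (k - 1) := abs_pow_sub_pow_le _ _ _
    _ = |(⌊y⌋₊ : ℝ) - y| * (k * y ^ (k - 1)) := by
        rw [Nat.abs_cast, abs_of_nonneg hy, max_eq_right floor_le, mul_assoc]
    _ ≤ k * y ^ (k - 1) := mul_le_of_le_one_left (by positivity) abs_sub_le_one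

lemma abs_errorTerm_le (hrk : 1 < r * (k - 1)) {x : ℝ} (hx : 0 ≤ x) :
    |errorTerm r k x| ≤ 2 ^ k * k * (∑' d : ℕ, 1 / (d : ℝ) ^ (r * (k - 1))) * x ^ (k - 1) := by
  have hasSum_bound :=
    ((Real.summable_one_div_nat_pow.mpr hrk).hasSum.mul_left (2 ^ k * (k : ℝ))).mul_right
      (x ^ (k - 1))
  have hrk' : 1 < r * k := hrk.trans_le (Nat.mul_le_mul_left r (Nat.sub_le k 1))
  rw [← (hasSum_errorTerm hrk' x).tsum_eq, ← Real.norm_eq_abs]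
  refine tsum_of_norm_bounded hasSum_bound fun d => ?_
  have abs_moebius_le : |(moebius d : ℝ)| ≤ 1 :=
    mod_cast ArithmeticFunction.abs_moebius_le_one (n := d)
  set y := x / (d : ℝ) ^ r with hy
  calc ‖(moebius d : ℝ) * ((2 * (⌊y⌋₊ : ℝ)) ^ k - (2 * y) ^ k)‖
      = |(moebius d : ℝ)| * (2 ^ k * |(⌊y⌋₊ : ℝ) ^ k - y ^ k|) := by
        rw [Real.norm_eq_abs, abs_mul, mul_pow, mul_pow, ← mul_sub, abs_mul,
          abs_of_pos (by positivity : (0 : ℝ) < 2 ^ k)]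
    _ ≤ 1 * (2 ^ k * (k * y ^ (k - 1))) := by
        gcongr
        exact abs_natFloor_pow_sub_pow_le k (by positivity)
    _ = 2 ^ k * k * (1 / (d : ℝ) ^ (r * (k - 1))) * x ^ (k - 1) := by
        rw [hy, div_pow, ← pow_mul]
        ring

lemma errorTerm_isBigO (hrk : 1 < r * (k - 1)) :
    errorTerm r k =O[atTop] fun x : ℝ => x ^ (k - 1) := by
  refine IsBigO.of_bound (2 ^ k * k * ∑' d : ℕ, 1 / (d : ℝ) ^ (r * (k - 1))) ?_
  filter_upwards [eventually_ge_atTop 0] with x hx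
  rw [Real.norm_eq_abs, Real.norm_of_nonneg (pow_nonneg hx _)]
  exact abs_errorTerm_le hrk hx

end UpperBound

section Omega

lemma limsup_norm_div_norm_pos {α E F : Type*} [NormedAddCommGroup E] [NormedAddCommGroup F]
    {l : Filter α} {f : α → E} {g : α → F} (hO : f =O[l] g) (ho : ¬ f =o[l] g) :
    0 < limsup (fun x => ‖f x‖ / ‖g x‖) l := by
  contrapose! ho
  refine isLittleO_iff.mpr fun c hc => ?_
  have ratio_bounded : l.IsBoundedUnder (· ≤ ·) fun x => ‖f x‖ / ‖g x‖ := by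
    simpa only [norm_div, norm_norm] using div_isBoundedUnder_of_isBigO hO.norm_norm
  have ratio_lt : ∀ᶠ x in l, ‖f x‖ / ‖g x‖ < c :=
    eventually_lt_of_limsup_lt (ho.trans_lt hc) ratio_bounded
  filter_upwards [ratio_lt, hO.eq_zero_imp] with x hlt hzero
  rcases eq_or_ne (g x) 0 with hg | hg
  · simp [hzero hg, hg]
  · exact ((div_lt_iff₀ (norm_pos_iff.mpr hg)).mp hlt).le

lemma half_mul_pow_le_add_half_pow_sub_pow (m : ℕ) {y : ℝ} (hy : 0 ≤ y) :
    1 / 2 * y ^ m ≤ (y + 1 / 2) ^ (m + 1) - y ^ (m + 1) := by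
  have pow_le : y ^ m ≤ (y + 1 / 2) ^ m := by gcongr; linarith
  calc 1 / 2 * y ^ m = y ^ m * (y + 1 / 2) - y ^ (m + 1) := by ring
    _ ≤ (y + 1 / 2) ^ m * (y + 1 / 2) - y ^ (m + 1) := by gcongr
    _ = (y + 1 / 2) ^ (m + 1) - y ^ (m + 1) := by rw [pow_succ (y + 1 / 2)]

lemma natCast_pow_isBigO_add_half_pow_sub_pow (m : ℕ) :
    (fun n : ℕ => (n : ℝ) ^ m) =O[atTop]
      fun n : ℕ => ((n : ℝ) + 1 / 2) ^ (m + 1) - (n : ℝ) ^ (m + 1) := by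
  refine IsBigO.of_bound 2 (Eventually.of_forall fun n => ?_)
  have increment_ge := half_mul_pow_le_add_half_pow_sub_pow m (y := n) n.cast_nonneg
  rw [Real.norm_of_nonneg (by positivity)]
  linarith [Real.le_norm_self (((n : ℝ) + 1 / 2) ^ (m + 1) - (n : ℝ) ^ (m + 1))]

lemma natCast_add_half_pow_isBigO (m : ℕ) :
    (fun n : ℕ => ((n : ℝ) + 1 / 2) ^ m) =O[atTop] fun n : ℕ => (n : ℝ) ^ m := by
  refine IsBigO.pow (IsBigO.of_bound 2 ((eventually_ge_atTop 1).mono fun n hn => ?_)) m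
  have hn' : (1 : ℝ) ≤ n := Nat.one_le_cast.mpr hn
  rw [Real.norm_of_nonneg (by positivity), Real.norm_of_nonneg (by positivity)]
  linarith

lemma natFloor_step_sub_monomial_not_isLittleO (f : ℕ → ℝ) {A : ℝ} (hA : A ≠ 0) (m : ℕ) :
    ¬ (fun x : ℝ => f ⌊x⌋₊ - A * x ^ (m + 1)) =o[atTop] fun x : ℝ => x ^ m := by
  intro ho
  have tendsto_half : Tendsto (fun n : ℕ => (n : ℝ) + 1 / 2) atTop atTop :=
    tendsto_atTop_add_const_right _ _ tendsto_natCast_atTop_atTop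
  have ho_nat : (fun n : ℕ => f n - A * (n : ℝ) ^ (m + 1)) =o[atTop] fun n : ℕ => (n : ℝ) ^ m := by
    simpa only [Function.comp_def, Nat.floor_natCast] using
      ho.comp_tendsto tendsto_natCast_atTop_atTop
  have ho_half : (fun n : ℕ => f n - A * ((n : ℝ) + 1 / 2) ^ (m + 1)) =o[atTop]
      fun n : ℕ => (n : ℝ) ^ m := by
    have floor_half (n : ℕ) : ⌊(n : ℝ) + 1 / 2⌋₊ = n :=
      (Nat.floor_eq_iff (by positivity)).mpr ⟨by linarith, by linarith⟩
    simpa only [Function.comp_def, floor_half] using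
      (ho.comp_tendsto tendsto_half).trans_isBigO (natCast_add_half_pow_isBigO m)
  have ho_increment : (fun n : ℕ => ((n : ℝ) + 1 / 2) ^ (m + 1) - (n : ℝ) ^ (m + 1)) =o[atTop]
      fun n : ℕ => (n : ℝ) ^ m := by
    refine ((ho_nat.sub ho_half).const_mul_left A⁻¹).congr_left fun n => ?_
    field_simp
    ring
  have frequently_ne_zero : ∃ᶠ n : ℕ in atTop, (n : ℝ) ^ m ≠ 0 :=
    ((eventually_ge_atTop 1).mono fun n hn =>
      pow_ne_zero m (Nat.cast_ne_zero.mpr (Nat.one_le_iff_ne_zero.mp hn))).frequently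
  exact isLittleO_irrefl frequently_ne_zero
    ((natCast_pow_isBigO_add_half_pow_sub_pow m).trans_isLittleO ho_increment)

lemma errorTerm_not_isLittleO {r k : ℕ} (hrk : 1 < r * k) :
    ¬ errorTerm r k =o[atTop] fun x : ℝ => x ^ (k - 1) := by
  have hk : k ≠ 0 := right_ne_zero_of_mul (by omega : r * k ≠ 0)
  have coeff_ne_zero : 2 ^ k / zetaR (r * k) ≠ 0 :=
    (div_pos (by positivity) (zetaR_pos (mod_cast hrk))).ne'
  have errorTerm_eq :
      errorTerm r k = fun x => (V r k ⌊x⌋₊ : ℝ) - 2 ^ k / zetaR (r * k) * x ^ (k - 1 + 1) := by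
    ext x
    rw [errorTerm, V_natFloor, Nat.sub_one_add_one hk, mul_pow]
    ring
  rw [errorTerm_eq]
  exact natFloor_step_sub_monomial_not_isLittleO (fun n => V r k n) coeff_ne_zero (k - 1)

end Omega

theorem error_term_exact_order (r k : ℕ) (hr : 1 ≤ r) (hk : 2 ≤ k) (hrk : 3 ≤ r * k) :
    ((fun x : ℝ => (V r k x : ℝ) - (2 * x) ^ k / zetaR (r * k)) =O[atTop]
        fun x : ℝ => x ^ (k - 1)) ∧
    0 < limsup (fun x : ℝ =>
        |(V r k x : ℝ) - (2 * x) ^ k / zetaR (r * k)| / x ^ (k - 1)) atTop := by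
  have exponent_gt_one : 1 < r * (k - 1) := by
    rcases hr.eq_or_lt with rfl | hr
    · omega
    · exact hr.trans_le (Nat.le_mul_of_pos_right r (by omega))
  have upper := errorTerm_isBigO exponent_gt_one
  refine ⟨upper, ?_⟩
  have limsup_pos := limsup_norm_div_norm_pos upper (errorTerm_not_isLittleO (by omega))
  rwa [limsup_congr ((eventually_ge_atTop 0).mono fun x hx => by
    rw [Real.norm_of_nonneg (pow_nonneg hx _)])] at limsup_pos
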